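/- Let λ = (λ_1 ≤ … ≤ λ_n) be a sequential nondecreasing sequence of positive integers for which I(λ) exists, let S = S_λ = {x ∈ {-1,0,1}^n : Σ_{i=1}^n λ_i x_i = 0} be the cut associated to λ, and let π ∈ P(n) be the partition whose only non-singleton block is I(λ). If τ ∈ P(n) is a partition with exactly one non-singleton block B, where |B| ≥ 2 and Σ_{i∈B} λ_i = λ_n, then τ ∈ π↓S. -/

import Mathlib

/-- A vector in ℝ^n with all coordinates in {-1,0,1}. -/
def IsCube {n : ℕ} (x : Fin n → ℝ) : Prop := ∀ i, x i = -1 ∨ x i = 0 ∨ x i = 1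

def PlusSet {n : ℕ} (x : Fin n → ℝ) : Set (Fin n) := {i | x i = 1}

def MinusSet {n : ℕ} (x : Fin n → ℝ) : Set (Fin n) := {i | x i = -1}

/-- An `n`-cut: a span-closed subset of {-1,0,1}^n all of whose nonzero elements
have nonempty Plus and Minus sets. -/
def IsCut {n : ℕ} (S : Set (Fin n → ℝ)) : Prop :=
  (∀ x ∈ S, IsCube x) ∧
  ((Submodule.span ℝ S : Set (Fin n → ℝ)) ∩ {x | IsCube x}) = S ∧
  ∀ x ∈ S, x ≠ 0 → (PlusSet x).Nonempty ∧ (MinusSet x).Nonempty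
/-- The multiset of coordinates where `x` equals 1 (each appearing once). -/
noncomputable def plusM {n : ℕ} (x : Fin n → ℝ) : Multiset (Fin n) :=
  (Finset.univ.filter (fun i => x i = 1)).val

/-- The multiset of coordinates where `x` equals -1 (each appearing once). -/
noncomputable def minusM {n : ℕ} (x : Fin n → ℝ) : Multiset (Fin n) :=
  (Finset.univ.filter (fun i => x i = -1)).val

/-- One step of the closure operation `⇓S` on collections of multisubsets of `[n]`:
(2) merge two blocks; (3) replace, inside one block, one copy of each element of
`Plus(x)` by one copy of each element of `Minus(x)`, for some `x ∈ S`. -/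
inductive DownStep {n : ℕ} (S : Set (Fin n → ℝ)) :
    Multiset (Multiset (Fin n)) → Multiset (Multiset (Fin n)) → Prop
  | merge (B₁ B₂ : Multiset (Fin n)) (rest : Multiset (Multiset (Fin n))) :
      DownStep S (B₁ ::ₘ B₂ ::ₘ rest) ((B₁ + B₂) ::ₘ rest)
  | swap (B₁ : Multiset (Fin n)) (rest : Multiset (Multiset (Fin n))) (x : Fin n → ℝ)
      (hx : x ∈ S) (hsub : plusM x ≤ B₁) :
      DownStep S (B₁ ::ₘ rest) ((B₁ - plusM x + minusM x) ::ₘ rest)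

/-- A multiset of multisets of `[n]` which is an honest partition of `[n]`:
all blocks nonempty, globally no repetitions, and every element covered. -/
def IsPartitionM {n : ℕ} (A : Multiset (Multiset (Fin n))) : Prop :=
  (∀ B ∈ A, B ≠ 0) ∧ A.sum.Nodup ∧ ∀ i : Fin n, i ∈ A.sum

/-- `π ↓ S`: the set of honest partitions of `[n]` reachable from `π` by `⇓S`-steps. -/
def downClos {n : ℕ} (S : Set (Fin n → ℝ)) (π : Multiset (Multiset (Fin n))) :
    Set (Multiset (Multiset (Fin n))) :=
  {ρ | IsPartitionM ρ ∧ Relation.ReflTransGen (DownStep S) π ρ}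

/-- The partition of `[n]` whose only non-singleton blocks are `Plus(s)` and `Minus(s)`. -/
noncomputable def partOf {n : ℕ} (s : Fin n → ℝ) : Multiset (Multiset (Fin n)) :=
  plusM s ::ₘ minusM s ::ₘ
    ((Finset.univ.filter (fun i => s i = 0)).val.map (fun i => ({i} : Multiset (Fin n))))

/-- `S ∖ Π`: remove from `S` every element `s` whose associated partition
(non-singleton blocks `Plus(s)`, `Minus(s)`) lies in `Π`. -/
noncomputable def cutMinus {n : ℕ} (S : Set (Fin n → ℝ))
    (P : Set (Multiset (Multiset (Fin n)))) : Set (Fin n → ℝ) :=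
  {s | s ∈ S ∧ partOf s ∉ P}

/-- The partition of `[n]` whose only (potentially) non-singleton block is `A`. -/
def onlyBlock {n : ℕ} (A : Finset (Fin n)) : Multiset (Multiset (Fin n)) :=
  A.val ::ₘ ((Finset.univ \ A).val.map (fun i => ({i} : Multiset (Fin n))))

/-- Restriction of a partition of `[n]` to the first `l` coordinates `{0,…,l-1}`. -/
def restrictFirst {n : ℕ} (l : ℕ) (ρ : Multiset (Multiset (Fin n))) :
    Multiset (Multiset (Fin l)) :=
  (ρ.map (fun B => B.filterMap
    (fun i => if h : (i : ℕ) < l then some (⟨(i : ℕ), h⟩ : Fin l) else none))).filter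
    (fun B => B ≠ 0)

/-- A sequence `λ : [n] → ℕ` is sequential if whenever `Σ_{i∈I} λ_i = Σ_{j∈J} λ_j`
and `q ∈ I` is the maximum of `I ∪ J`, some subset `J' ⊆ J` has `Σ_{j∈J'} λ_j = λ_q`. -/
def IsSequentialSeq {n : ℕ} (lam : Fin n → ℕ) : Prop :=
  ∀ I J : Finset (Fin n), ∑ i ∈ I, lam i = ∑ j ∈ J, lam j →
    ∀ q ∈ I, (∀ p ∈ I ∪ J, p ≤ q) → ∃ J' ⊆ J, lam q = ∑ j ∈ J', lam j

/-- `A` is lexicographically larger than `B`: either `B ⊆ A`, or, writing the elements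
increasingly, the largest `q` elements agree and the next one of `A` is bigger. -/
def LexLarger {n : ℕ} (A B : Finset (Fin n)) : Prop :=
  B ⊆ A ∨ ∃ q : ℕ, q < min A.card B.card ∧
    (∀ i : ℕ, i < q →
      (A.sort (· ≤ ·))[A.card - 1 - i]? = (B.sort (· ≤ ·))[B.card - 1 - i]?) ∧
    ∃ x y : Fin n, (A.sort (· ≤ ·))[A.card - 1 - q]? = some x ∧
      (B.sort (· ≤ ·))[B.card - 1 - q]? = some y ∧ y < x

/-- A subset `I` of `[n+1]` with at least two elements whose `λ`-sum is the last
(largest) part of `λ`. -/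
def GoodSet {n : ℕ} (lam : Fin (n + 1) → ℕ) (I : Finset (Fin (n + 1))) : Prop :=
  2 ≤ I.card ∧ ∑ i ∈ I, lam i = lam (Fin.last n)

/-- `I` is the set `I(λ)`: a good set which is lexicographically larger than every
other good set. -/
def IsIlam {n : ℕ} (lam : Fin (n + 1) → ℕ) (I : Finset (Fin (n + 1))) : Prop :=
  GoodSet lam I ∧ ∀ J, GoodSet lam J → LexLarger I J

/-- A sequential `λ` is strongly sequential if either no good set exists, or `I(λ)`
exists and, with `q = max I(λ)`, some `J ⊆ I(λ) ∖ {q}` has `Σ_{j∈J} λ_j = λ_q`. -/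
def StronglySequential {n : ℕ} (lam : Fin (n + 1) → ℕ) : Prop :=
  IsSequentialSeq lam ∧
  ((∀ I, ¬ GoodSet lam I) ∨
    ∃ I, IsIlam lam I ∧ ∃ q ∈ I, (∀ p ∈ I, p ≤ q) ∧
      ∃ J ⊆ I.erase q, lam q = ∑ j ∈ J, lam j)

/-- The cut associated to a sequence `λ`: cube vectors orthogonal to `λ`. -/
noncomputable def cutOf {n : ℕ} (lam : Fin n → ℕ) : Set (Fin n → ℝ) :=
  {x | IsCube x ∧ ∑ i, (lam i : ℝ) * x i = 0}

/-! The blocks `I = I(λ)` and `B` have equal weight, so one swap turns `I` into `B`. Now the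
elements of `B \ I` occur twice and those of `I \ B` not at all, and it remains to turn the
singletons of `B \ I` into the singletons of `I \ B`. If `K ⊆ I \ B` and `J ⊆ B \ I` are nonempty
and of equal weight, then the largest element `q` of `K ∪ J` lies in `K`: otherwise sequentiality
writes `λ q` as the weight of some `T ⊆ K`, and exchanging `T` for `q` in `I` gives a
lexicographically larger good set. Sequentiality now gives `T ⊆ J` of weight `λ q`; merge the
singletons of `T`, swap the result for `{q}`, and repeat with `K \ {q}` and `J \ T`. -/

open Relation

section Lex

variable {α : Type*} [LinearOrder α]

lemma lt_of_getElem?_lt {l : List α} (hl : l.SortedLT) {i j : ℕ} {x y : α}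
    (hi : l[i]? = some x) (hj : l[j]? = some y) (hxy : x < y) : i < j := by
  obtain ⟨_, rfl⟩ := List.getElem?_eq_some_iff.1 hi
  obtain ⟨_, rfl⟩ := List.getElem?_eq_some_iff.1 hj
  exact hl.getElem_lt_getElem_iff.1 hxy

lemma exists_getElem?_sort_of_lt {s : Finset α} {q : ℕ} {y z : α}
    (hq : q < s.card) (hy : (s.sort (· ≤ ·))[s.card - 1 - q]? = some y) (hz : z ∈ s)
    (hyz : y < z) : ∃ i < q, (s.sort (· ≤ ·))[s.card - 1 - i]? = some z := by
  obtain ⟨p, hp⟩ := List.mem_iff_getElem?.1 ((Finset.mem_sort (· ≤ ·)).2 hz)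
  have hqp : s.card - 1 - q < p := lt_of_getElem?_lt s.sortedLT_sort hy hp hyz
  have hps : p < s.card := by simpa using (List.getElem?_eq_some_iff.1 hp).1
  exact ⟨s.card - 1 - p, by omega, by rwa [show s.card - 1 - (s.card - 1 - p) = p by omega]⟩

lemma LexLarger.toColex_le {n : ℕ} {A B : Finset (Fin n)} (h : LexLarger A B) :
    toColex B ≤ toColex A := by
  obtain hBA | ⟨q, hq, hagree, x, y, hx, hy, hyx⟩ := h
  · exact Finset.Colex.toColex_mono hBA
  obtain ⟨hqA, hqB⟩ := lt_min_iff.1 hq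
  have hindex : ∀ z ∈ B, y < z → ∃ i < q, (A.sort (· ≤ ·))[A.card - 1 - i]? = some z := by
    intro z hz hyz
    obtain ⟨i, hi, hiz⟩ := exists_getElem?_sort_of_lt hqB hy hz hyz
    exact ⟨i, hi, (hagree i hi).trans hiz⟩
  have hxB : x ∉ B := by
    intro hxB
    obtain ⟨i, hi, hix⟩ := hindex x hxB hyx
    have := (List.getElem?_inj (by simp; omega) (A.sort_nodup (· ≤ ·))).1 (hix.trans hx.symm)
    omega
  refine (Finset.Colex.lt_iff_exists_forall_lt.2
    ⟨x, (Finset.mem_sort (· ≤ ·)).1 (List.mem_of_getElem? hx), hxB, fun z hzB hzA => ?_⟩).le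
  by_contra! hxz
  obtain ⟨i, -, hiz⟩ := hindex z hzB (hyx.trans_le hxz)
  exact hzA ((Finset.mem_sort (· ≤ ·)).1 (List.mem_of_getElem? hiz))

end Lex

section DownStep

variable {n : ℕ} {S : Set (Fin n → ℝ)} {A A' C C' : Multiset (Multiset (Fin n))}

lemma DownStep.add_right (h : DownStep S A A') (C : Multiset (Multiset (Fin n))) :
    DownStep S (A + C) (A' + C) := by
  cases h with
  | merge B₁ B₂ rest => simpa only [Multiset.cons_add] using DownStep.merge B₁ B₂ (rest + C)
  | swap B₁ rest x hx hsub =>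
    simpa only [Multiset.cons_add] using DownStep.swap B₁ (rest + C) x hx hsub

lemma reflTransGen_downStep_add (hA : ReflTransGen (DownStep S) A A')
    (hC : ReflTransGen (DownStep S) C C') : ReflTransGen (DownStep S) (A + C) (A' + C') := by
  have hright : ReflTransGen (DownStep S) (A + C) (A' + C) :=
    hA.lift (· + C) fun _ _ h => h.add_right C
  have hleft : ReflTransGen (DownStep S) (C + A') (C' + A') :=
    hC.lift (· + A') fun _ _ h => h.add_right A'
  rw [add_comm C, add_comm C'] at hleft
  exact hright.trans hleft

lemma reflTransGen_downStep_singleton_sum (hA : A ≠ 0) :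
    ReflTransGen (DownStep S) A {A.sum} := by
  induction A using Multiset.induction_on with
  | empty => exact absurd rfl hA
  | cons P A ih =>
    obtain rfl | hA' := eq_or_ne A 0
    · simpa using ReflTransGen.refl
    · have hmergeTail : ReflTransGen (DownStep S) (P ::ₘ A) (P ::ₘ A.sum ::ₘ 0) :=
        reflTransGen_downStep_add (A := {P}) .refl (ih hA')
      simpa using hmergeTail.tail (.merge P A.sum 0)

end DownStep

section SumEqSwap

variable {n : ℕ} {lam : Fin n → ℕ} {P Q : Finset (Fin n)}

/-- The vector `1_P - 1_Q`; when `P` and `Q` have the same weight it lies in the cut and swaps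
the block `P` for the block `Q`. -/
def indicatorDiff (P Q : Finset (Fin n)) (i : Fin n) : ℝ :=
  (if i ∈ P then 1 else 0) - (if i ∈ Q then 1 else 0)

lemma plusM_indicatorDiff (P Q : Finset (Fin n)) :
    plusM (indicatorDiff P Q) = P.val - Q.val := by
  rw [plusM, ← Finset.sdiff_val]
  congr 1
  ext i
  rw [Finset.mem_filter_univ, Finset.mem_sdiff, indicatorDiff]
  by_cases hP : i ∈ P <;> by_cases hQ : i ∈ Q <;> norm_num [hP, hQ]

lemma minusM_indicatorDiff (P Q : Finset (Fin n)) :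
    minusM (indicatorDiff P Q) = Q.val - P.val := by
  rw [minusM, ← Finset.sdiff_val]
  congr 1
  ext i
  rw [Finset.mem_filter_univ, Finset.mem_sdiff, indicatorDiff]
  by_cases hP : i ∈ P <;> by_cases hQ : i ∈ Q <;> norm_num [hP, hQ]

lemma indicatorDiff_mem_cutOf (h : ∑ i ∈ P, lam i = ∑ i ∈ Q, lam i) :
    indicatorDiff P Q ∈ cutOf lam := by
  refine ⟨fun i => ?_, ?_⟩
  · by_cases hP : i ∈ P <;> by_cases hQ : i ∈ Q <;> simp [indicatorDiff, hP, hQ]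
  · simp only [indicatorDiff, mul_sub, mul_ite, mul_one, mul_zero, Finset.sum_sub_distrib,
      Finset.sum_ite_mem, Finset.univ_inter, sub_eq_zero]
    exact_mod_cast h

lemma downStep_cutOf_of_sum_eq (h : ∑ i ∈ P, lam i = ∑ i ∈ Q, lam i) :
    DownStep (cutOf lam) {P.val} {Q.val} := by
  have hblock : P.val - (P.val - Q.val) + (Q.val - P.val) = Q.val := by
    ext i
    simp only [Multiset.count_add, Multiset.count_sub]
    omega
  have hswap := DownStep.swap P.val 0 _ (indicatorDiff_mem_cutOf h)
    (by rw [plusM_indicatorDiff]; exact tsub_le_self)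
  rwa [plusM_indicatorDiff, minusM_indicatorDiff, hblock] at hswap

end SumEqSwap

section SingletonBlocks

variable {n : ℕ} {lam : Fin n → ℕ} {J K T P : Finset (Fin n)}

/-- The partition of `J` into singletons: the part of a configuration made of one-element
blocks. -/
def singletonBlocks (J : Finset (Fin n)) : Multiset (Multiset (Fin n)) :=
  J.val.map fun i => {i}

lemma sum_singletonBlocks (J : Finset (Fin n)) : (singletonBlocks J).sum = J.val :=
  Multiset.sum_map_singleton J.val

lemma singletonBlocks_add_sdiff (hT : T ⊆ J) :
    singletonBlocks T + singletonBlocks (J \ T) = singletonBlocks J := by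
  rw [singletonBlocks, singletonBlocks, ← Multiset.map_add, Finset.sdiff_val,
    add_tsub_cancel_of_le (Finset.val_le_iff.2 hT), singletonBlocks]

lemma onlyBlock_eq_add (B : Finset (Fin n)) :
    onlyBlock B = {B.val} + singletonBlocks (Finset.univ \ B) := rfl

lemma isPartitionM_onlyBlock {B : Finset (Fin n)} (hB : B.Nonempty) :
    IsPartitionM (onlyBlock B) := by
  have hsum : (onlyBlock B).sum = Finset.univ.val := by
    rw [onlyBlock_eq_add, Multiset.sum_add, Multiset.sum_singleton, sum_singletonBlocks,
      Finset.sdiff_val, add_tsub_cancel_of_le (Finset.val_le_iff.2 (Finset.subset_univ B))]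
  refine ⟨fun C hC => ?_, hsum ▸ Finset.univ.nodup, fun i => hsum ▸ Finset.mem_univ i⟩
  rcases Multiset.mem_cons.1 hC with rfl | hC
  · exact mt Finset.val_eq_zero.1 hB.ne_empty
  · obtain ⟨i, -, rfl⟩ := Multiset.mem_map.1 hC
    exact Multiset.singleton_ne_zero i

lemma reflTransGen_singletonBlocks_of_sum_eq (hT : T.Nonempty)
    (h : ∑ i ∈ T, lam i = ∑ i ∈ P, lam i) :
    ReflTransGen (DownStep (cutOf lam)) (singletonBlocks T) {P.val} := by
  have hne : singletonBlocks T ≠ 0 := by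
    simpa [singletonBlocks] using hT.ne_empty
  have hmerge : ReflTransGen (DownStep (cutOf lam)) (singletonBlocks T) {T.val} :=
    sum_singletonBlocks T ▸ reflTransGen_downStep_singleton_sum hne
  exact hmerge.tail (downStep_cutOf_of_sum_eq h)

/-- The hypothesis that lets one split `J` greedily into pieces whose weights are the weights of
the elements of `K`: at every stage, some remaining element of `K` has the weight of some subset
of what remains of `J`. -/
def SplitsGreedily {ι M : Type*} [AddCommMonoid M] (w : ι → M) (K J : Finset ι) : Prop :=
  ∀ K' ⊆ K, ∀ J' ⊆ J, K'.Nonempty → ∑ i ∈ K', w i = ∑ i ∈ J', w i →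
    ∃ q ∈ K', ∃ T ⊆ J', w q = ∑ i ∈ T, w i

lemma SplitsGreedily.mono {ι M : Type*} [AddCommMonoid M] {w : ι → M} {K K' J J' : Finset ι}
    (h : SplitsGreedily w K J) (hK : K' ⊆ K) (hJ : J' ⊆ J) : SplitsGreedily w K' J' :=
  fun K₁ hK₁ J₁ hJ₁ => h K₁ (hK₁.trans hK) J₁ (hJ₁.trans hJ)

lemma SplitsGreedily.reflTransGen_singletonBlocks (h : SplitsGreedily lam K J)
    (hpos : ∀ i, 0 < lam i) (hsum : ∑ i ∈ K, lam i = ∑ i ∈ J, lam i) :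
    ReflTransGen (DownStep (cutOf lam)) (singletonBlocks J) (singletonBlocks K) := by
  induction K using Finset.strongInduction generalizing J with
  | H K ih =>
    obtain rfl | hK := K.eq_empty_or_nonempty
    · have hJ : J = ∅ := Finset.eq_empty_of_forall_notMem fun i hi =>
        (hpos i).ne' (Finset.sum_eq_zero_iff.1 hsum.symm i hi)
      rw [hJ]
    obtain ⟨q, hq, T, hTJ, hqT⟩ := h K subset_rfl J subset_rfl hK hsum
    have hT : T.Nonempty := Finset.nonempty_of_sum_ne_zero (hqT ▸ (hpos q).ne')
    have hpiece : ReflTransGen (DownStep (cutOf lam)) (singletonBlocks T) (singletonBlocks {q}) :=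
      reflTransGen_singletonBlocks_of_sum_eq (P := {q}) hT (by simp [hqT])
    have hsum' : ∑ i ∈ K \ {q}, lam i = ∑ i ∈ J \ T, lam i := by
      have hKq := Finset.sum_sdiff (f := lam) (Finset.singleton_subset_iff.2 hq)
      have hJT := Finset.sum_sdiff (f := lam) hTJ
      rw [Finset.sum_singleton] at hKq
      omega
    have hrest := ih (K \ {q}) (Finset.sdiff_ssubset (by simpa) (by simp))
      (h.mono Finset.sdiff_subset Finset.sdiff_subset) hsum'
    rw [← singletonBlocks_add_sdiff hTJ,
      ← singletonBlocks_add_sdiff (Finset.singleton_subset_iff.2 hq)]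
    exact reflTransGen_downStep_add hpiece hrest

lemma SplitsGreedily.reflTransGen_onlyBlock (h : SplitsGreedily lam (K \ J) (J \ K))
    (hpos : ∀ i, 0 < lam i) (hsum : ∑ i ∈ K, lam i = ∑ i ∈ J, lam i) :
    ReflTransGen (DownStep (cutOf lam)) (onlyBlock K) (onlyBlock J) := by
  have hsingletons := h.reflTransGen_singletonBlocks hpos
    (Finset.sum_sdiff_eq_sum_sdiff_iff.2 hsum)
  have hcommon : (Finset.univ \ K) \ (J \ K) = (Finset.univ \ J) \ (K \ J) := by grind
  rw [onlyBlock_eq_add, onlyBlock_eq_add,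
    ← singletonBlocks_add_sdiff (Finset.sdiff_subset_sdiff (Finset.subset_univ J) subset_rfl),
    ← singletonBlocks_add_sdiff (Finset.sdiff_subset_sdiff (Finset.subset_univ K) subset_rfl),
    hcommon]
  exact reflTransGen_downStep_add (.single (downStep_cutOf_of_sum_eq hsum))
    (reflTransGen_downStep_add hsingletons .refl)

end SingletonBlocks

section GoodSet

variable {n : ℕ} {lam : Fin (n + 1) → ℕ} {I B T : Finset (Fin (n + 1))} {q : Fin (n + 1)}

lemma GoodSet.lt_last (hB : GoodSet lam B) (hpos : ∀ i, 0 < lam i) (hq : q ∈ B) :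
    lam q < lam (Fin.last n) := by
  obtain ⟨p, hp, hpq⟩ := Finset.exists_mem_ne hB.1 q
  exact hB.2 ▸ Finset.single_lt_sum hpq hq hp (hpos p) fun _ _ _ => Nat.zero_le _

lemma GoodSet.insert_sdiff (hI : GoodSet lam I) (hT : T ⊆ I) (hqI : q ∉ I)
    (hqT : lam q = ∑ i ∈ T, lam i) (hq : lam q < lam (Fin.last n)) :
    GoodSet lam (insert q (I \ T)) := by
  have hqIT : q ∉ I \ T := fun h => hqI (Finset.sdiff_subset h)
  have hsum : ∑ i ∈ I \ T, lam i + lam q = lam (Fin.last n) := by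
    rw [hqT, Finset.sum_sdiff hT, hI.2]
  have hne : (I \ T).Nonempty := Finset.nonempty_of_sum_ne_zero (f := lam) (by omega)
  refine ⟨?_, by rw [Finset.sum_insert hqIT, add_comm, hsum]⟩
  rw [Finset.card_insert_of_notMem hqIT]
  exact Nat.succ_le_succ hne.card_pos

lemma IsIlam.exists_lt_of_sum_eq (hI : IsIlam lam I) (hT : T ⊆ I) (hqI : q ∉ I)
    (hqT : lam q = ∑ i ∈ T, lam i) (hq : lam q < lam (Fin.last n)) : ∃ t ∈ T, q < t := by
  by_contra! hle
  have hlarger : toColex I < toColex (insert q (I \ T)) := by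
    refine Finset.Colex.lt_iff_exists_forall_lt.2
      ⟨q, Finset.mem_insert_self _ _, hqI, fun t htI ht => ?_⟩
    have htT : t ∈ T := by
      by_contra htT
      exact ht (Finset.mem_insert_of_mem (Finset.mem_sdiff.2 ⟨htI, htT⟩))
    exact (hle t htT).lt_of_ne (ne_of_mem_of_not_mem htI hqI)
  exact hlarger.not_ge (hI.2 _ (hI.1.insert_sdiff hT hqI hqT hq)).toColex_le

lemma IsIlam.splitsGreedily (hI : IsIlam lam I) (hpos : ∀ i, 0 < lam i)
    (hseq : IsSequentialSeq lam) (hB : GoodSet lam B) : SplitsGreedily lam (I \ B) (B \ I) := by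
  intro K hK J hJ hne hsum
  obtain ⟨q, hq, hmax⟩ := (K ∪ J).exists_max_image id (hne.mono Finset.subset_union_left)
  obtain hqK | hqJ := Finset.mem_union.1 hq
  · exact ⟨q, hqK, hseq K J hsum q hqK hmax⟩
  · obtain ⟨hqB, hqI⟩ := Finset.mem_sdiff.1 (hJ hqJ)
    obtain ⟨T, hTK, hqT⟩ := hseq J K hsum.symm q hqJ (by rwa [Finset.union_comm])
    obtain ⟨t, htT, hqt⟩ := hI.exists_lt_of_sum_eq (hTK.trans (hK.trans Finset.sdiff_subset))
      hqI hqT (hB.lt_last hpos hqB)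
    exact absurd hqt (hmax t (Finset.mem_union_left J (hTK htT))).not_gt

end GoodSet

theorem onlyBlock_mem_downClos_general {n : ℕ} {lam : Fin (n + 1) → ℕ}
    (hpos : ∀ i, 0 < lam i) (hseq : IsSequentialSeq lam) {I B : Finset (Fin (n + 1))}
    (hI : IsIlam lam I) (hB : GoodSet lam B) :
    onlyBlock B ∈ downClos (cutOf lam) (onlyBlock I) := by
  have hne : B.Nonempty := Finset.card_pos.1 (zero_lt_two.trans_le hB.1)
  have hsum : ∑ i ∈ I, lam i = ∑ i ∈ B, lam i := hI.1.2.trans hB.2.symm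
  exact ⟨isPartitionM_onlyBlock hne,
    (hI.splitsGreedily hpos hseq hB).reflTransGen_onlyBlock hpos hsum⟩

/-- for a sequential `λ` with `I(λ)` existing, any partition `τ` with a
unique non-singleton block `B` satisfying `Σ_{i∈B} λ_i = λ_max` lies in `π↓S`, where
`π` is the partition with unique non-singleton block `I(λ)`. -/
theorem onlyBlock_mem_downClos {n : ℕ} (lam : Fin (n + 1) → ℕ)
    (hpos : ∀ i, 0 < lam i) (hmono : Monotone lam) (hseq : IsSequentialSeq lam)
    (I : Finset (Fin (n + 1))) (hI : IsIlam lam I)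
    (B : Finset (Fin (n + 1))) (hB : 2 ≤ B.card)
    (hBsum : ∑ i ∈ B, lam i = lam (Fin.last n)) :
    onlyBlock B ∈ downClos (cutOf lam) (onlyBlock I) :=
  onlyBlock_mem_downClos_general hpos hseq hI ⟨hB, hBsum⟩
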